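/- arXiv:math/0703546 — 2 statements merged into one kernel-verified Lean document; each statement's English description precedes it below -/
import Mathlib

section
/- det (1/F_{l+j+α}(θ))_{0≤l,j≤n} = (−1)^{α C(n+1,2)} (F_α(θ) ∏_{k=1}^n F_{2k+α}(θ) (2k+α−1 choose k)_{F(θ)}^2)^{−1}, where C(n+1,2) = n(n+1)/2. -/
noncomputable def genFib (θ : ℝ) (m : ℕ) : ℝ :=
  (Real.exp (m * θ) - (-1 : ℝ) ^ m * Real.exp (-(m * θ))) / (Real.exp θ + Real.exp (-θ))

noncomputable def fibinom (θ : ℝ) (n k : ℕ) : ℝ :=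
  ∏ j ∈ Finset.range k, genFib θ (n - j) / genFib θ (j + 1)

/-!
By Vajda's identity `F (m + a) F (m + b) - F m F (m + a + b) = q ^ m F a F b`, pivoting the matrix
`(1 / F (l + j + α))` of size `n + 1` on its last diagonal entry leaves, as Schur complement,
`q ^ α` times the same matrix of size `n` with row `i` and column `i` both rescaled by
`q ^ i F (n - i) / F (i + n + α)`. The product of these scaling factors is a power of `q` over a
generalized binomial coefficient, and the determinant follows by induction on the size.
-/

open Finset Matrix

/-- Vajda's identity for a sequence `F` with multiplier `q`. For the Fibonacci numbers `q = -1`, for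
the natural numbers `q = 1`, and for the `q`-numbers `1 + q + ⋯ + q ^ (m - 1)` it is `q` itself. -/
def IsVajda {R : Type*} [CommRing R] (F : ℕ → R) (q : R) : Prop :=
  ∀ m a b : ℕ, F (m + a) * F (m + b) - F m * F (m + a + b) = q ^ m * F a * F b

section Field

variable {K : Type*} [Field K]

/-- The generalized binomial coefficient `(m choose k)_F` of a sequence `F`, of which `fibinom θ` is
the case `F = genFib θ`. As there, `m - j` is truncated, so `k ≤ m` is intended. -/
def seqBinom (F : ℕ → K) (m k : ℕ) : K :=
  ∏ j ∈ range k, F (m - j) / F (j + 1)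

/-- The `n × n` Filbert matrix `(1 / F (l + j + α))` of a sequence `F` with shift `α`, its rows and
columns numbered from `0`. -/
def filbertMatrix (F : ℕ → K) (α n : ℕ) : Matrix (Fin n) (Fin n) K :=
  of fun l j => 1 / F (l + j + α)

/-- The Schur complement of the last diagonal entry of a matrix, meaningful when that entry is
nonzero. -/
def schurLast {n : ℕ} (M : Matrix (Fin (n + 1)) (Fin (n + 1)) K) : Matrix (Fin n) (Fin n) K :=
  of fun i j => M i.castSucc j.castSucc -
    M i.castSucc (Fin.last n) * (M (Fin.last n) (Fin.last n))⁻¹ * M (Fin.last n) j.castSucc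

/-- The factor by which row `i` and column `i` of the `n × n` Filbert matrix are rescaled in the
Schur complement of the last entry of the `(n + 1) × (n + 1)` one. -/
def schurScale (F : ℕ → K) (q : K) (α n i : ℕ) : K :=
  q ^ i * (F (n - i) / F (i + n + α))

theorem det_eq_mul_det_schurLast {n : ℕ} (M : Matrix (Fin (n + 1)) (Fin (n + 1)) K)
    (h : M (Fin.last n) (Fin.last n) ≠ 0) :
    M.det = M (Fin.last n) (Fin.last n) * (schurLast M).det := by
  set p := M (Fin.last n) (Fin.last n) with hp
  let D : Matrix (Fin 1) (Fin 1) K := diagonal fun _ => p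
  let : Invertible D := ⟨diagonal fun _ => p⁻¹, by simp [D, h], by simp [D, h]⟩
  have h_blocks : M.submatrix finSumFinEquiv finSumFinEquiv = fromBlocks
      (of fun i j : Fin n => M i.castSucc j.castSucc) (of fun i _ => M i.castSucc (Fin.last n))
      (of fun _ j => M (Fin.last n) j.castSucc) D := by
    ext (i | i) (j | j) <;> simp [D, hp, Fin.natAdd, Fin.last, Fin.castSucc, diagonal_unique]
  rw [← det_submatrix_equiv_self finSumFinEquiv M, h_blocks, det_fromBlocks₂₂, det_fin_one]
  congr 2
  ext i j
  simp [schurLast, Matrix.mul_apply, D, p]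

theorem prod_schurScale (F : ℕ → K) (q : K) {α : ℕ} (hα : α ≠ 0) (n : ℕ) :
    ∏ i : Fin n, schurScale F q α n i =
      q ^ n.choose 2 * (seqBinom F (2 * n + α - 1) n)⁻¹ := by
  have h_binom : ∏ i ∈ range n, F (n - i) / F (i + n + α) =
      (seqBinom F (2 * n + α - 1) n)⁻¹ := by
    rw [seqBinom, ← prod_inv_distrib, ← prod_range_reflect]
    refine prod_congr rfl fun i hi => ?_
    have hi : i < n := mem_range.mp hi
    rw [inv_div]
    congr 2 <;> lia
  rw [Fin.prod_univ_eq_prod_range (schurScale F q α n)]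
  simp only [schurScale]
  rw [prod_mul_distrib, prod_pow_eq_pow_sum, sum_range_id, ← Nat.choose_two_right, h_binom]

theorem IsVajda.binet (x y c : K) : IsVajda (fun m => (x ^ m - y ^ m) / c) (x * y) := by
  intro m a b
  ring

section Vajda

variable {F : ℕ → K} {q : K}

theorem IsVajda.one_div_sub (hF : IsVajda F q) {m a b : ℕ} (hm : F m ≠ 0)
    (ha : F (m + a) ≠ 0) (hb : F (m + b) ≠ 0) :
    1 / F m - 1 / F (m + a) * F (m + a + b) * (1 / F (m + b)) =
      q ^ m * (F a / F (m + a)) * (F b / F (m + b)) * (1 / F m) := by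
  field_simp
  linear_combination hF m a b

theorem IsVajda.schurLast_filbertMatrix (hF : IsVajda F q) {α : ℕ}
    (hFα : ∀ m, F (m + α) ≠ 0) (n : ℕ) :
    schurLast (filbertMatrix F α (n + 1)) =
      q ^ α • (diagonal (fun i : Fin n => schurScale F q α n i) * filbertMatrix F α n *
        diagonal (fun i : Fin n => schurScale F q α n i)) := by
  ext i j
  have h_entry := hF.one_div_sub (a := n - j) (b := n - i) (hFα (i + j))
  rw [show i + j + α + (n - j) = i + n + α by lia, show i + j + α + (n - i) = n + j + α by lia,
    show i + n + α + (n - i) = n + n + α by lia] at h_entry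
  simp only [schurLast, filbertMatrix, schurScale, of_apply, Matrix.smul_apply, mul_diagonal,
    diagonal_mul, Fin.val_castSucc, Fin.val_last, smul_eq_mul, one_div, inv_inv,
    add_comm (j : ℕ) n] at h_entry ⊢
  rw [h_entry (hFα _) (hFα _)]
  ring

theorem IsVajda.det_filbertMatrix_succ (hF : IsVajda F q) {α : ℕ} (hα : α ≠ 0)
    (hFα : ∀ m, F (m + α) ≠ 0) (n : ℕ) :
    (filbertMatrix F α (n + 1)).det =
      q ^ (α * n + 2 * n.choose 2) * (F (2 * n + α) * seqBinom F (2 * n + α - 1) n ^ 2)⁻¹ *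
        (filbertMatrix F α n).det := by
  have h_last : filbertMatrix F α (n + 1) (Fin.last n) (Fin.last n) = (F (2 * n + α))⁻¹ := by
    simp [filbertMatrix, two_mul]
  rw [det_eq_mul_det_schurLast _ (h_last ▸ inv_ne_zero (hFα _)), h_last,
    hF.schurLast_filbertMatrix hFα, det_smul, Fintype.card_fin, det_mul, det_mul, det_diagonal,
    prod_schurScale F q hα]
  ring

/-- The exponent `2 * (n + 1).choose 3` is `∑ k ≤ n, k * (k - 1)`, contributed by the powers `q ^ i`
in `schurScale`; being even, it disappears when `q = -1`. -/
theorem det_generalized_Filbert_general (hF : IsVajda F q) (hF₀ : ∀ m ≠ 0, F m ≠ 0) {α : ℕ}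
    (hα : α ≠ 0) (n : ℕ) :
    (filbertMatrix F α (n + 1)).det =
      q ^ (α * (n * (n + 1) / 2) + 2 * (n + 1).choose 3) *
        (F α * ∏ k ∈ Icc 1 n, F (2 * k + α) * seqBinom F (2 * k + α - 1) k ^ 2)⁻¹ := by
  have h_choose (n : ℕ) : n * (n + 1) / 2 = (n + 1).choose 2 := by
    rw [Nat.choose_two_right, mul_comm, Nat.add_sub_cancel]
  simp only [h_choose]
  induction n with
  | zero => simp [filbertMatrix, Nat.choose_eq_zero_of_lt]
  | succ n ih =>
    rw [hF.det_filbertMatrix_succ hα (fun _ => hF₀ _ (by lia)), ih, prod_Icc_succ_top (by lia),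
      Nat.choose_succ_succ (n + 1) 1, Nat.choose_succ_succ (n + 1) 2, Nat.choose_one_right]
    ring

end Vajda

end Field

theorem isVajda_genFib (θ : ℝ) : IsVajda (genFib θ) (-1) := by
  have h_binet : genFib θ = fun m : ℕ =>
      (Real.exp θ ^ m - (-Real.exp (-θ)) ^ m) / (Real.exp θ + Real.exp (-θ)) := by
    funext m
    rw [genFib, ← mul_neg, Real.exp_nat_mul, Real.exp_nat_mul, ← mul_pow, neg_one_mul]
  have h_mul : Real.exp θ * -Real.exp (-θ) = -1 := by
    rw [mul_neg, ← Real.exp_add, add_neg_cancel, Real.exp_zero]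
  rw [h_binet, ← h_mul]
  exact .binet _ _ _

theorem genFib_ne_zero {θ : ℝ} (hθ : θ ≠ 0) {m : ℕ} (hm : m ≠ 0) : genFib θ m ≠ 0 := by
  have h_exp : Real.exp (m * θ) ≠ Real.exp (-(m * θ)) := fun h =>
    mul_ne_zero (Nat.cast_ne_zero.mpr hm) hθ (self_eq_neg.mp (Real.exp_injective h))
  refine div_ne_zero ?_ (by positivity)
  rcases neg_one_pow_eq_or ℝ m with h | h <;> rw [h]
  · rwa [one_mul, sub_ne_zero]
  · rw [neg_one_mul, sub_neg_eq_add]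
    positivity

theorem det_generalized_Filbert (θ : ℝ) (hθ : 0 < θ) (n α : ℕ) (hα : 1 ≤ α)
    (A : Matrix (Fin (n + 1)) (Fin (n + 1)) ℝ)
    (hA : ∀ l j : Fin (n + 1), A l j = 1 / genFib θ ((l : ℕ) + (j : ℕ) + α)) :
    A.det = (-1 : ℝ) ^ (α * (n * (n + 1) / 2)) *
      (genFib θ α *
        ∏ k ∈ Finset.Icc 1 n, genFib θ (2 * k + α) * fibinom θ (2 * k + α - 1) k ^ 2)⁻¹ := by
  rw [show A = filbertMatrix (genFib θ) α (n + 1) from Matrix.ext hA,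
    det_generalized_Filbert_general (isVajda_genFib θ) (fun _ => genFib_ne_zero hθ.ne') (by lia)]
  simp [pow_add, pow_mul, seqBinom, fibinom]
end

section
/- The inverse of the Filbert matrix (1/F_{l+j+1})_{0≤l,j≤n}, where F_m are the Fibonacci numbers, has integer entries; explicitly, its (l,j)-entry is (−1)^{n(l+j+1) − l(l−1)/2 − j(j−1)/2} F_{l+j+1} (n+l+1 choose n−j)_F (n+j+1 choose n−l)_F (l+j choose l)_F (l+j choose j)_F, where (m choose k)_F = ∏_{i=1}^k F_{m−i+1}/F_i is the Fibonomial coefficient. -/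
/-- Fibonomial coefficient as a rational number. -/
noncomputable def fibnom (m k : ℕ) : ℚ :=
  ∏ i ∈ Finset.range k, (Nat.fib (m - i) : ℚ) / (Nat.fib (i + 1) : ℚ)

/-!
With `u l = (F_l, F_{l+1})` and `v j = (-F_{j+1}, F_j)`, the addition formula says that `F_{l+j+1}`
is the determinant of `u l` and `v j`, so the Filbert matrix is a homogeneous Cauchy matrix
`(1 / det (u l, v j))`. Interpolating products of linear forms at the points `u l` of the
projective line shows that the inverse of a Cauchy matrix is its transpose scaled by diagonal
matrices. The scaling factors here are products of Fibonacci numbers, because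
`det (u l, u i) = ± F_{|l-i|}` by d'Ocagne's identity. Homogeneous coordinates avoid a
separate treatment of the point at infinity `v 0 = (-1, 0)`.
-/

open Finset Matrix Nat

section Cauchy

section Wedge

variable {R : Type*} [CommRing R]

/-- The determinant of two vectors in the plane, the bracket of the homogeneous coordinates of two
points of the projective line. -/
def wedge (a b : R × R) : R := a.1 * b.2 - a.2 * b.1

lemma wedge_self (a : R × R) : wedge a a = 0 := by
  rw [wedge]; ring

lemma wedge_swap (a b : R × R) : wedge a b = -wedge b a := by
  rw [wedge, wedge]; ring

lemma wedge_plucker_relation (a b c d : R × R) :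
    wedge a b * wedge c d = wedge c b * wedge a d + wedge d b * wedge c a := by
  simp only [wedge]; ring

end Wedge

variable {K ι κ : Type*} [Field K] [DecidableEq ι]

lemma wedge_mul_prod_erase_div {s : Finset ι} {k : ι} (hk : k ∈ s) (u : ι → K × K)
    (w z : K × K) (hz : ∀ i ∈ s, wedge z (u i) ≠ 0) :
    wedge w (u k) * ∏ i ∈ s.erase k, wedge w (u i) / wedge (u k) (u i) =
      (∏ i ∈ s, wedge w (u i) / wedge z (u i)) *
        (wedge z (u k) * ∏ i ∈ s.erase k, wedge z (u i) / wedge (u k) (u i)) := by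
  have hprod : ∏ i ∈ s, wedge z (u i) ≠ 0 := prod_ne_zero_iff.2 hz
  have hfull (a : K × K) := mul_prod_erase s (fun i ↦ wedge a (u i)) hk
  rw [prod_div_distrib, prod_div_distrib, prod_div_distrib, mul_div_assoc', mul_div_assoc', hfull,
    hfull, mul_div_assoc', div_mul_cancel₀ _ hprod]

/-- Homogeneous Lagrange interpolation at the points `u k`, for a product of linear forms. -/
theorem prod_wedge_eq_sum (s : Finset ι) (t : Finset κ) (u : ι → K × K) (v : κ → K × K)
    (w : K × K) (hcard : #t + 1 = #s)
    (hu : (s : Set ι).Pairwise fun k i ↦ wedge (u k) (u i) ≠ 0) :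
    ∏ j ∈ t, wedge w (v j) = ∑ k ∈ s, (∏ j ∈ t, wedge (u k) (v j)) *
      ∏ i ∈ s.erase k, wedge w (u i) / wedge (u k) (u i) := by
  classical
  induction t using Finset.induction_on generalizing s w with
  | empty =>
    obtain ⟨m, rfl⟩ := card_eq_one.1 hcard.symm
    simp
  | insert j t hj ih =>
    obtain ⟨m, s, hm, rfl, hs⟩ := card_eq_succ.1 hcard.symm
    rw [card_insert_of_notMem hj] at hs
    have hne : ∀ k ∈ s, k ≠ m := fun k hk h ↦ hm (h ▸ hk)
    have hus := hu.mono (coe_subset.2 (subset_insert m s))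
    have hmu : ∀ i ∈ s, wedge (u m) (u i) ≠ 0 := fun i hi ↦
      hu (mem_insert_self m s) (mem_insert_of_mem hi) (hne i hi).symm
    set c := ∏ i ∈ s, wedge w (u i) / wedge (u m) (u i) with hc
    -- The Plücker relation splits off the factor of `v j`, leaving the interpolants of the
    -- product over `t` at the points `w` and `u m`.
    have summand : ∀ k ∈ s, (∏ i ∈ insert j t, wedge (u k) (v i)) *
        ∏ i ∈ (insert m s).erase k, wedge w (u i) / wedge (u k) (u i) =
        wedge w (v j) * ((∏ i ∈ t, wedge (u k) (v i)) *
          ∏ i ∈ s.erase k, wedge w (u i) / wedge (u k) (u i)) -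
        wedge (u m) (v j) * c * ((∏ i ∈ t, wedge (u k) (v i)) *
          ∏ i ∈ s.erase k, wedge (u m) (u i) / wedge (u k) (u i)) := by
      intro k hk
      have hkm : wedge (u k) (u m) ≠ 0 :=
        hu (mem_insert_of_mem hk) (mem_insert_self m s) (hne k hk)
      have hm' : m ∉ s.erase k := fun h ↦ hm (mem_of_mem_erase h)
      have hscale := wedge_mul_prod_erase_div hk u w (u m) hmu
      rw [← hc, wedge_swap (u m) (u k)] at hscale
      rw [prod_insert hj, erase_insert_of_ne (hne k hk).symm, prod_insert hm']
      field_simp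
      linear_combination (∏ i ∈ t, wedge (u k) (v i)) *
          (∏ i ∈ s.erase k, wedge w (u i) / wedge (u k) (u i)) *
          wedge_plucker_relation (u k) (v j) w (u m) +
        (∏ i ∈ t, wedge (u k) (v i)) * wedge (u m) (v j) * hscale
    rw [sum_insert hm, erase_insert hm, sum_congr rfl summand, sum_sub_distrib, ← mul_sum,
      ← mul_sum, ← ih s w hs.symm hus, ← ih s (u m) hs.symm hus, prod_insert hj, prod_insert hj]
    ring

variable [Fintype ι]

/-- The Cauchy matrix of two families of points of the projective line, given by homogeneous
coordinates. For the coordinates `(x k, 1)` and `(y l, 1)` its entries are `1 / (x k - y l)`. -/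
def cauchyMatrix (u v : ι → K × K) : Matrix ι ι K :=
  of fun k l ↦ (wedge (u k) (v l))⁻¹

/-- The diagonal scaling factors that turn the transposed Cauchy matrix into the inverse. -/
def cauchyWeight (u v : ι → K × K) (k : ι) : K :=
  (∏ i, wedge (u k) (v i)) / ∏ i ∈ univ.erase k, wedge (u k) (u i)

/-- The transposed Cauchy matrix scaled by `cauchyWeight`, which inverts `cauchyMatrix u v`. It is
written with `cauchyMatrix v u`, the negative of the transpose, since `wedge` is antisymmetric. -/
def cauchyInverse (u v : ι → K × K) : Matrix ι ι K :=
  diagonal (cauchyWeight v u) * cauchyMatrix v u * diagonal (cauchyWeight u v)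

theorem cauchyInverse_mul_cauchyMatrix (u v : ι → K × K)
    (hu : Pairwise fun k i ↦ wedge (u k) (u i) ≠ 0)
    (hv : Pairwise fun k i ↦ wedge (v k) (v i) ≠ 0) (huv : ∀ k l, wedge (u k) (v l) ≠ 0) :
    cauchyInverse u v * cauchyMatrix u v = 1 := by
  ext j l
  have hv_prod : ∏ i ∈ univ.erase j, wedge (v j) (v i) ≠ 0 :=
    prod_ne_zero_iff.2 fun i hi ↦ hv (ne_of_mem_erase hi).symm
  have interpolation := prod_wedge_eq_sum univ (univ.erase l) u v (v j)
    (card_erase_add_one (mem_univ l)) fun k _ i _ hki ↦ hu hki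
  calc (cauchyInverse u v * cauchyMatrix u v) j l
      = (∏ i ∈ univ.erase l, wedge (v j) (v i)) / ∏ i ∈ univ.erase j, wedge (v j) (v i) := by
        rw [interpolation, Matrix.mul_apply, sum_div]
        refine sum_congr rfl fun k _ ↦ ?_
        have hvu : wedge (v j) (u k) ≠ 0 := by
          rw [wedge_swap]; exact neg_ne_zero.2 (huv k j)
        have hul := huv k l
        simp only [cauchyInverse, mul_diagonal, diagonal_mul, cauchyMatrix, cauchyWeight, of_apply,
          prod_div_distrib]
        rw [← mul_prod_erase univ (fun i ↦ wedge (v j) (u i)) (mem_univ k),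
          ← mul_prod_erase univ (fun i ↦ wedge (u k) (v i)) (mem_univ l)]
        field_simp
    _ = (1 : Matrix ι ι K) j l := by
        obtain rfl | hjl := eq_or_ne j l
        · rw [div_self hv_prod, one_apply_eq]
        · rw [prod_eq_zero (mem_erase.2 ⟨hjl, mem_univ j⟩) (wedge_self _), zero_div,
            one_apply_ne hjl]

end Cauchy

section Fibonomial

lemma cast_fib_succ_ne_zero (m : ℕ) : (fib (m + 1) : ℚ) ≠ 0 :=
  Nat.cast_ne_zero.2 (fib_pos.2 m.succ_pos).ne'

/-- The product `F_1 F_2 ⋯ F_m`, the analogue of the factorial in the fibonomial coefficients. -/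
def fibFactorial (m : ℕ) : ℕ := ∏ i ∈ range m, fib (i + 1)

lemma fibFactorial_zero : fibFactorial 0 = 1 :=
  prod_range_zero _

lemma fibFactorial_succ (m : ℕ) : fibFactorial (m + 1) = fibFactorial m * fib (m + 1) :=
  prod_range_succ _ _

lemma cast_fibFactorial_ne_zero (m : ℕ) : (fibFactorial m : ℚ) ≠ 0 :=
  Nat.cast_ne_zero.2 (prod_ne_zero_iff.2 fun i _ ↦ (fib_pos.2 i.succ_pos).ne')

lemma fibFactorial_mul_prod_fib (k m : ℕ) :
    fibFactorial k * ∏ i ∈ range m, fib (k + i + 1) = fibFactorial (k + m) :=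
  (prod_range_add _ k m).symm

lemma fibnom_zero_right (m : ℕ) : fibnom m 0 = 1 :=
  prod_range_zero _

lemma fibnom_succ_right (m k : ℕ) :
    fibnom m (k + 1) = fibnom m k * (fib (m - k) / fib (k + 1)) :=
  prod_range_succ _ _

lemma fibnom_succ_succ (m k : ℕ) :
    fibnom (m + 1) (k + 1) = fibnom m k * (fib (m + 1) / fib (k + 1)) := by
  simp only [fibnom, prod_div_distrib]
  rw [prod_range_succ', prod_range_succ (fun i ↦ (fib (i + 1) : ℚ)), mul_div_mul_comm]
  simp only [Nat.add_sub_add_right, Nat.sub_zero]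

lemma fibnom_eq_zero_of_lt {m k : ℕ} (h : m < k) : fibnom m k = 0 :=
  prod_eq_zero (mem_range.2 h) (by simp)

lemma fibnom_add_left (k b : ℕ) :
    fibnom (k + b) k = fibFactorial (k + b) / (fibFactorial k * fibFactorial b) := by
  have hb := cast_fibFactorial_ne_zero b
  induction k with
  | zero =>
    rw [fibnom_zero_right, zero_add, fibFactorial_zero, Nat.cast_one, one_mul, div_self hb]
  | succ k ih =>
    rw [Nat.add_right_comm, fibnom_succ_succ, ih, fibFactorial_succ, fibFactorial_succ]
    push_cast
    field_simp

lemma fibnom_pascal (m k : ℕ) :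
    fibnom (m + 1) (k + 1) = fib (m - k + 1) * fibnom m k + fib k * fibnom m (k + 1) := by
  rw [fibnom_succ_succ, fibnom_succ_right]
  obtain hmk | hkm := lt_or_ge m k
  · simp [fibnom_eq_zero_of_lt hmk]
  · have hfib : (fib (m + 1) : ℚ) = fib (m - k) * fib k + fib (m - k + 1) * fib (k + 1) := by
      have h := fib_add (m - k) k
      rw [Nat.sub_add_cancel hkm] at h
      exact_mod_cast h
    have := cast_fib_succ_ne_zero k
    rw [hfib]
    field_simp
    ring

theorem fibnom_mem_range_intCast (m k : ℕ) : fibnom m k ∈ (Int.castRingHom ℚ).range := by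
  induction m generalizing k with
  | zero =>
    cases k with
    | zero => exact fibnom_zero_right 0 ▸ one_mem _
    | succ k => exact fibnom_eq_zero_of_lt k.succ_pos ▸ zero_mem _
  | succ m ih =>
    cases k with
    | zero => exact fibnom_zero_right (m + 1) ▸ one_mem _
    | succ k =>
      rw [fibnom_pascal]
      exact add_mem (mul_mem (natCast_mem _ _) (ih k)) (mul_mem (natCast_mem _ _) (ih (k + 1)))

lemma fib_mul_fibnom_eq_fibFactorial {n l j : ℕ} (hl : l ≤ n) (hj : j ≤ n) :
    (fib (l + j + 1) : ℚ) * (fibnom (n + l + 1) (n - j) * fibnom (n + j + 1) (n - l) *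
        fibnom (l + j) l * fibnom (l + j) j) =
      fibFactorial (n + l + 1) / (fibFactorial l ^ 2 * fibFactorial (n - l)) *
        (fibFactorial (n + j + 1) / (fibFactorial j ^ 2 * fibFactorial (n - j))) /
        fib (l + j + 1) := by
  have hlj := fibnom_add_left (n - j) (l + j + 1)
  have hjl := fibnom_add_left (n - l) (l + j + 1)
  have hswap := fibnom_add_left j l
  rw [show n - j + (l + j + 1) = n + l + 1 by omega] at hlj
  rw [show n - l + (l + j + 1) = n + j + 1 by omega] at hjl
  rw [add_comm j l] at hswap
  rw [hlj, hjl, hswap, fibnom_add_left l j, fibFactorial_succ (l + j)]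
  have := cast_fib_succ_ne_zero (l + j)
  have := cast_fibFactorial_ne_zero (l + j)
  push_cast
  field_simp

end Fibonomial

section Filbert

/-- The vector `(F_l, F_{l+1})`. -/
def fibVector (l : ℕ) : ℚ × ℚ := (fib l, fib (l + 1))

/-- The vector `(-F_{j+1}, F_j)`, obtained by rotating `fibVector j` through a right angle, so that
its determinant with `fibVector l` is the scalar product `F_l F_j + F_{l+1} F_{j+1}`. -/
def fibCovector (j : ℕ) : ℚ × ℚ := (-fib (j + 1), fib j)

lemma wedge_fibVector_fibCovector (l j : ℕ) :
    wedge (fibVector l) (fibCovector j) = fib (l + j + 1) := by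
  rw [fib_add]
  push_cast [wedge, fibVector, fibCovector]
  ring

lemma wedge_fibCovector (l j : ℕ) :
    wedge (fibCovector l) (fibCovector j) = wedge (fibVector l) (fibVector j) := by
  simp only [wedge, fibVector, fibCovector]
  ring

lemma wedge_fibVector_add_left (m i : ℕ) :
    wedge (fibVector (i + m)) (fibVector i) = (-1) ^ i * fib m := by
  induction i with
  | zero => simp [wedge, fibVector]
  | succ i ih =>
    rw [pow_succ, mul_right_comm, ← ih, Nat.add_right_comm]
    push_cast [wedge, fibVector, fib_add_two]
    ring

lemma wedge_fibVector_add_right (m k : ℕ) :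
    wedge (fibVector k) (fibVector (k + m)) = (-1) ^ (k + 1) * fib m := by
  rw [wedge_swap, wedge_fibVector_add_left]
  ring

lemma wedge_fibVector_ne_zero {k i : ℕ} (h : k ≠ i) :
    wedge (fibVector k) (fibVector i) ≠ 0 := by
  wlog hki : k < i generalizing k i
  · rw [wedge_swap]
    exact neg_ne_zero.2 (this h.symm (h.symm.lt_of_le (not_lt.1 hki)))
  obtain ⟨m, rfl⟩ := Nat.exists_eq_add_of_lt hki
  rw [add_assoc, wedge_fibVector_add_right]
  exact mul_ne_zero (pow_ne_zero _ (by norm_num)) (cast_fib_succ_ne_zero m)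

lemma prod_range_wedge_fibVector (k : ℕ) :
    ∏ i ∈ range k, wedge (fibVector k) (fibVector i) = (-1) ^ k.choose 2 * fibFactorial k := by
  have hwedge : ∀ i ∈ range k, wedge (fibVector k) (fibVector i) =
      (-1) ^ i * (fib (k - 1 - i + 1) : ℚ) := by
    intro i hi
    have hik := mem_range.1 hi
    rw [← wedge_fibVector_add_left, show i + (k - 1 - i + 1) = k by omega]
  rw [prod_congr rfl hwedge, prod_mul_distrib, prod_pow_eq_pow_sum, sum_range_id,
    ← choose_two_right, prod_range_reflect (fun i ↦ (fib (i + 1) : ℚ)), fibFactorial,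
    Nat.cast_prod]

lemma prod_erase_wedge_fibVector (k m : ℕ) :
    ∏ i ∈ (range (k + m + 1)).erase k, wedge (fibVector k) (fibVector i) =
      (-1) ^ (k.choose 2 + (k + 1) * m) * (fibFactorial k * fibFactorial m) := by
  induction m with
  | zero =>
    rw [add_zero, range_add_one, erase_insert notMem_range_self, prod_range_wedge_fibVector]
    simp [fibFactorial]
  | succ m ih =>
    rw [range_add_one, erase_insert_of_ne (by omega),
      prod_insert fun h ↦ notMem_range_self (mem_of_mem_erase h), ← add_assoc k m 1, ih,
      add_assoc k m 1, wedge_fibVector_add_right, fibFactorial_succ]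
    push_cast
    ring

lemma neg_one_pow_choose_two_add {R : Type*} [Ring R] {n k : ℕ} (hk : k ≤ n) :
    (-1 : R) ^ (k.choose 2 + (k + 1) * (n - k)) = (-1) ^ (n * (k + 1) + k.choose 2) := by
  obtain ⟨m, rfl⟩ := Nat.exists_eq_add_of_le hk
  rw [Nat.add_sub_cancel_left, show (k + m) * (k + 1) + k.choose 2 =
    k.choose 2 + (k + 1) * m + k * (k + 1) by ring, pow_add _ _ (k * (k + 1)),
    (even_mul_succ_self k).neg_one_pow, mul_one]

lemma intCast_choose_two (k : ℕ) : (k.choose 2 : ℤ) = k * (k - 1) / 2 := by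
  cases k with
  | zero => rfl
  | succ k =>
    rw [choose_two_right]
    push_cast [Nat.add_sub_cancel]
    simp

lemma neg_one_zpow_sub_sub {K : Type*} [DivisionRing K] (n l j : ℕ) :
    (-1 : K) ^ ((n * (l + j + 1) : ℤ) - l * (l - 1) / 2 - j * (j - 1) / 2) =
      (-1) ^ (n * (l + j + 1) + l.choose 2 + j.choose 2) := by
  have hne : (-1 : K) ≠ 0 := neg_ne_zero.2 one_ne_zero
  have hinv (e : ℕ) : ((-1 : K) ^ e)⁻¹ = (-1) ^ e := by rw [← inv_pow, inv_neg_one]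
  rw [← intCast_choose_two, ← intCast_choose_two, zpow_sub₀ hne, zpow_sub₀ hne, zpow_natCast,
    zpow_natCast, div_eq_mul_inv, div_eq_mul_inv, hinv, hinv, pow_add, pow_add]
  exact_mod_cast rfl

lemma prod_univ_erase_eq_prod_range_erase {M : Type*} [CommMonoid M] {n : ℕ} (f : ℕ → M)
    (k : Fin n) : ∏ i ∈ univ.erase k, f i = ∏ i ∈ (range n).erase k, f i := by
  rw [← Nat.Iio_eq_range, ← Fin.map_valEmbedding_univ]
  exact (prod_map (univ.erase k) Fin.valEmbedding f).symm.trans (by rw [map_erase]; rfl)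

variable {n : ℕ}

lemma cauchyWeight_fibVector (k : Fin (n + 1)) :
    cauchyWeight (fun i : Fin (n + 1) ↦ fibVector i) (fun i ↦ fibCovector i) k =
      (-1) ^ (n * (k + 1) + (k : ℕ).choose 2) *
        (fibFactorial (n + k + 1) / (fibFactorial k ^ 2 * fibFactorial (n - k))) := by
  have hk : (k : ℕ) ≤ n := k.is_le
  have hnum : ∏ i : Fin (n + 1), wedge (fibVector k) (fibCovector i) =
      (fibFactorial (n + k + 1) : ℚ) / fibFactorial k := by
    simp only [wedge_fibVector_fibCovector]
    rw [Fin.prod_univ_eq_prod_range (fun i ↦ (fib (k + i + 1) : ℚ)),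
      eq_div_iff (cast_fibFactorial_ne_zero k), mul_comm, show n + k + 1 = k + (n + 1) by ring]
    exact_mod_cast fibFactorial_mul_prod_fib k (n + 1)
  have hden : ∏ i ∈ univ.erase k, wedge (fibVector k) (fibVector i) =
      (-1) ^ (n * (k + 1) + (k : ℕ).choose 2) * (fibFactorial k * fibFactorial (n - k) : ℚ) := by
    rw [prod_univ_erase_eq_prod_range_erase fun i ↦ wedge (fibVector k) (fibVector i),
      ← neg_one_pow_choose_two_add hk, ← prod_erase_wedge_fibVector, Nat.add_sub_cancel' hk]
  rw [cauchyWeight, hnum, hden]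
  have := cast_fibFactorial_ne_zero k
  have := cast_fibFactorial_ne_zero (n - k)
  obtain hsign | hsign := neg_one_pow_eq_or ℚ (n * (k + 1) + (k : ℕ).choose 2) <;>
  · rw [hsign]
    field_simp

lemma cauchyWeight_fibCovector (k : Fin (n + 1)) :
    cauchyWeight (fun i : Fin (n + 1) ↦ fibCovector i) (fun i ↦ fibVector i) k =
      (-1) ^ (n + 1) *
        cauchyWeight (fun i : Fin (n + 1) ↦ fibVector i) (fun i ↦ fibCovector i) k := by
  have hwedge : ∀ i : Fin (n + 1), wedge (fibCovector k) (fibVector i) =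
      -wedge (fibVector k) (fibCovector i) := by
    intro i
    rw [wedge_swap, wedge_fibVector_fibCovector, wedge_fibVector_fibCovector, add_comm (i : ℕ)]
  simp only [cauchyWeight, wedge_fibCovector, hwedge]
  rw [prod_neg, Finset.card_univ, Fintype.card_fin, mul_div_assoc]

/-- The inverse of the Filbert matrix, as given by the inversion of Cauchy matrices. -/
def filbertInverse (n : ℕ) : Matrix (Fin (n + 1)) (Fin (n + 1)) ℚ :=
  cauchyInverse (fun l ↦ fibVector l) (fun j ↦ fibCovector j)

theorem filbertInverse_mul_cauchyMatrix (n : ℕ) :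
    filbertInverse n *
      cauchyMatrix (fun l : Fin (n + 1) ↦ fibVector l) (fun j ↦ fibCovector j) = 1 := by
  have hu : Pairwise fun k i : Fin (n + 1) ↦ wedge (fibVector k) (fibVector i) ≠ 0 :=
    fun k i hki ↦ wedge_fibVector_ne_zero (Fin.val_ne_of_ne hki)
  refine cauchyInverse_mul_cauchyMatrix _ _ hu ?_ fun k l ↦ ?_
  · simpa only [wedge_fibCovector] using hu
  · rw [wedge_fibVector_fibCovector]
    exact cast_fib_succ_ne_zero _

theorem filbertInverse_apply (l j : Fin (n + 1)) :
    filbertInverse n l j =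
      (-1) ^ (n * (l + j + 1) + (l : ℕ).choose 2 + (j : ℕ).choose 2) * fib (l + j + 1) *
        (fibnom (n + l + 1) (n - j) * fibnom (n + j + 1) (n - l) *
          fibnom (l + j) l * fibnom (l + j) j) := by
  have hsign : (-1 : ℚ) ^ (n + 1) * (-1) ^ (n * (l + 1) + (l : ℕ).choose 2) *
      (-1) ^ (n * (j + 1) + (j : ℕ).choose 2) =
      -(-1) ^ (n * (l + j + 1) + (l : ℕ).choose 2 + (j : ℕ).choose 2) := by
    rw [← pow_add, ← pow_add, show n + 1 + (n * (l + 1) + (l : ℕ).choose 2) +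
      (n * (j + 1) + (j : ℕ).choose 2) =
      n * (l + j + 1) + (l : ℕ).choose 2 + (j : ℕ).choose 2 + 1 + 2 * n by ring,
      pow_add _ _ (2 * n), (even_two_mul n).neg_one_pow, pow_succ]
    ring
  rw [filbertInverse, cauchyInverse, mul_diagonal, diagonal_mul, cauchyWeight_fibCovector,
    cauchyWeight_fibVector, cauchyWeight_fibVector, cauchyMatrix, of_apply, wedge_swap,
    wedge_fibVector_fibCovector, add_comm (j : ℕ) l, mul_assoc (_ ^ _) (fib _ : ℚ),
    fib_mul_fibnom_eq_fibFactorial l.is_le j.is_le, inv_neg]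
  linear_combination (-(fibFactorial (n + l + 1) / (fibFactorial l ^ 2 * fibFactorial (n - l)) *
    (fibFactorial (n + j + 1) / (fibFactorial j ^ 2 * fibFactorial (n - j))) /
    fib (l + j + 1)) : ℚ) * hsign

theorem filbertInverse_apply_mem_range_intCast (l j : Fin (n + 1)) :
    filbertInverse n l j ∈ (Int.castRingHom ℚ).range := by
  rw [filbertInverse_apply]
  apply_rules [mul_mem, pow_mem, neg_mem, one_mem, natCast_mem, fibnom_mem_range_intCast]

end Filbert

theorem inverse_Filbert_matrix (n : ℕ) (A B : Matrix (Fin (n + 1)) (Fin (n + 1)) ℚ)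
    (hA : ∀ l j : Fin (n + 1), A l j = 1 / (Nat.fib ((l : ℕ) + (j : ℕ) + 1) : ℚ))
    (hB : ∀ l j : Fin (n + 1), B l j =
      (-1 : ℚ) ^ ((n * ((l : ℕ) + (j : ℕ) + 1) : ℤ) - (l : ℕ) * ((l : ℕ) - 1) / 2 -
          (j : ℕ) * ((j : ℕ) - 1) / 2) *
        (Nat.fib ((l : ℕ) + (j : ℕ) + 1) : ℚ) *
        (fibnom (n + (l : ℕ) + 1) (n - (j : ℕ)) * fibnom (n + (j : ℕ) + 1) (n - (l : ℕ)) *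
          fibnom ((l : ℕ) + (j : ℕ)) (l : ℕ) * fibnom ((l : ℕ) + (j : ℕ)) (j : ℕ))) :
    (A * B = 1 ∧ B * A = 1) ∧ ∀ l j : Fin (n + 1), ∃ z : ℤ, B l j = z := by
  have hA_cauchy : A =
      cauchyMatrix (fun l : Fin (n + 1) ↦ fibVector l) (fun j ↦ fibCovector j) := by
    ext l j
    rw [hA, cauchyMatrix, of_apply, wedge_fibVector_fibCovector, one_div]
  have hB_inverse : B = filbertInverse n := by
    ext l j
    rw [hB, neg_one_zpow_sub_sub, filbertInverse_apply]
  have hBA : B * A = 1 := by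
    rw [hA_cauchy, hB_inverse, filbertInverse_mul_cauchyMatrix]
  refine ⟨⟨mul_eq_one_comm.1 hBA, hBA⟩, fun l j ↦ ?_⟩
  obtain ⟨z, hz⟩ := filbertInverse_apply_mem_range_intCast l j
  exact ⟨z, hB_inverse ▸ hz.symm⟩
end
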